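/- The number of tournaments on the 5-element set Fin 5 having no vertex of out-degree 4, no vertex of out-degree 0, exactly three vertices of out-degree 2 which form a directed 3-cycle among themselves, and such that the (unique) vertex of out-degree 3 does not defeat all three out-degree-2 vertices, is exactly 120. -/

import Mathlib

/-- A tournament: an irreflexive relation such that for distinct vertices exactly one
direction holds. -/
def IsTournament (r : Fin 5 → Fin 5 → Prop) : Prop :=
  (∀ a, ¬ r a a) ∧ ∀ a b : Fin 5, a ≠ b → Xor' (r a b) (r b a)

/-- The out-degree of a vertex: the number of vertices it defeats. -/
noncomputable def outDeg (r : Fin 5 → Fin 5 → Prop) (v : Fin 5) : ℕ :=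
  Nat.card {w : Fin 5 // r v w}

/-!
Let `p → q` be the arc between the two vertices outside the cycle `u → v → t → u`. A cycle vertex
beats one vertex of the cycle, hence exactly one of `p` and `q`, so `p → x` iff `x → q` for `x` on
the cycle. If `p` beats `k` cycle vertices, then `p` has out-degree `k + 1`; this excludes `k = 1`
(out-degree 2) and `k = 3` (out-degree 4), while for `k = 0` the vertex `q` has out-degree 3 and
beats the whole cycle. So `k = 2`, and after rotating the cycle all ten arcs are known: `Γ₂,₂` is
a single isomorphism class. Its members have no nontrivial automorphism, so by the
orbit-stabilizer theorem there are `5! = 120` of them.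
-/

theorem card_relIso_class_mul_card_aut {α : Type*} (s : α → α → Prop) :
    Nat.card {r : α → α → Prop // Nonempty (s ≃r r)} * Nat.card (s ≃r s) =
      Nat.card (Equiv.Perm α) := by
  rw [← Nat.card_prod]
  refine Nat.card_eq_of_bijective
    (fun x : {r : α → α → Prop // Nonempty (s ≃r r)} × (s ≃r s) ↦
      (x.2.trans x.1.2.some).toEquiv) ⟨?_, fun σ ↦ ?_⟩
  · rintro ⟨⟨r, hr⟩, f⟩ ⟨⟨r', hr'⟩, f'⟩ heq
    have happly (a : α) : hr.some (f a) = hr'.some (f' a) := Equiv.congr_fun heq a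
    obtain rfl : r = r' := by
      funext a b
      obtain ⟨a, rfl⟩ := (f.trans hr.some).surjective a
      obtain ⟨b, rfl⟩ := (f.trans hr.some).surjective b
      refine propext ((f.trans hr.some).map_rel_iff.trans ?_)
      simp only [RelIso.trans_apply, happly, RelIso.map_rel_iff]
    obtain rfl : f = f' := RelIso.ext fun a ↦ hr.some.injective (happly a)
    rfl
  · let relabel : s ≃r fun a b ↦ s (σ.symm a) (σ.symm b) := ⟨σ, by simp⟩
    have hr : Nonempty (s ≃r fun a b ↦ s (σ.symm a) (σ.symm b)) := ⟨relabel⟩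
    exact ⟨(⟨_, hr⟩, relabel.trans hr.some.symm), Equiv.ext fun a ↦ hr.some.apply_symm_apply (σ a)⟩

theorem nonempty_relIso_of_map_rel {α : Type*} [Finite α] {r s : α → α → Prop}
    [Std.Trichotomous r] [Std.Asymm s] (f : α → α) (hf : ∀ a b, r a b → s (f a) (f b)) :
    Nonempty (r ≃r s) :=
  let f' := RelEmbedding.ofMonotone f hf
  ⟨RelIso.ofSurjective f' (Finite.surjective_of_injective f'.injective)⟩

section

variable {r s : Fin 5 → Fin 5 → Prop}

theorem outDeg_relIso (e : r ≃r s) (a : Fin 5) : outDeg s (e a) = outDeg r a :=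
  (Nat.card_congr (e.toEquiv.subtypeEquiv fun _ ↦ e.map_rel_iff.symm)).symm

theorem outDeg_eq_sum_map [DecidableRel r] {l : List (Fin 5)} (hl : l.Nodup) (hlen : l.length = 5)
    (a : Fin 5) : outDeg r a = (l.map fun b ↦ if r a b then 1 else 0).sum := by
  have huniv : l.toFinset = Finset.univ := by
    rw [← Finset.card_eq_iff_eq_univ, List.toFinset_card_of_nodup hl, hlen, Fintype.card_fin]
  rw [outDeg, Nat.card_eq_fintype_card, Fintype.card_subtype, Finset.card_filter, ← huniv,
    List.sum_toFinset _ hl]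

namespace IsTournament

theorem rel_iff_not_rel (hr : IsTournament r) {a b : Fin 5} (hab : a ≠ b) :
    r a b ↔ ¬ r b a :=
  xor_iff_iff_not.mp (hr.2 a b hab)

theorem asymm (hr : IsTournament r) : Std.Asymm r where
  asymm a b hab := (hr.rel_iff_not_rel (by rintro rfl; exact hr.1 a hab)).mp hab

theorem trichotomous (hr : IsTournament r) : Std.Trichotomous r where
  trichotomous a b hab hba := by
    by_contra hne
    exact hab ((hr.rel_iff_not_rel hne).mpr hba)

theorem map (hr : IsTournament r) (e : r ≃r s) : IsTournament s := by
  refine ⟨fun a ↦ ?_, fun a b ↦ ?_⟩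
  · rw [← e.symm.map_rel_iff]
    exact hr.1 _
  · rw [← e.symm.injective.ne_iff, ← e.symm.map_rel_iff, ← e.symm.map_rel_iff]
    exact hr.2 _ _

end IsTournament

/-- Membership in the class `Γ₂,₂`, with `u → v → t → u` the cycle of out-degree-2 vertices. -/
def IsGamma22 (r : Fin 5 → Fin 5 → Prop) : Prop :=
  IsTournament r ∧ (¬ ∃ w, outDeg r w = 4) ∧ (¬ ∃ l, outDeg r l = 0) ∧
    (∃ u v t : Fin 5, u ≠ v ∧ v ≠ t ∧ u ≠ t ∧
      outDeg r u = 2 ∧ outDeg r v = 2 ∧ outDeg r t = 2 ∧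
      (∀ x, outDeg r x = 2 → x = u ∨ x = v ∨ x = t) ∧
      r u v ∧ r v t ∧ r t u ∧
      (∀ x, outDeg r x = 3 → ¬ (r x u ∧ r x v ∧ r x t)))

theorem IsGamma22.map (hr : IsGamma22 r) (e : r ≃r s) : IsGamma22 s := by
  obtain ⟨htour, hfour, hzero, u, v, t, huv_ne, hvt_ne, hut_ne, hu, hv, ht, htwo, huv, hvt, htu,
    hthree⟩ := hr
  have hdeg := outDeg_relIso e
  refine ⟨htour.map e, ?_, ?_, e u, e v, e t, e.injective.ne huv_ne, e.injective.ne hvt_ne,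
    e.injective.ne hut_ne, (hdeg u).trans hu, (hdeg v).trans hv, (hdeg t).trans ht, ?_,
    e.map_rel_iff.mpr huv, e.map_rel_iff.mpr hvt, e.map_rel_iff.mpr htu, ?_⟩
  · rw [e.surjective.exists]
    simpa only [hdeg] using hfour
  · rw [e.surjective.exists]
    simpa only [hdeg] using hzero
  · rw [e.surjective.forall]
    simpa only [hdeg, e.injective.eq_iff] using htwo
  · rw [e.surjective.forall]
    simpa only [hdeg, e.map_rel_iff] using hthree

/-- A representative of the class `Γ₂,₂`, given by its out-neighbourhoods: the cycle is
`0 → 1 → 2 → 0`, and the vertices of out-degree 3 and 1 are `3` and `4`. -/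
def gamma22Model (a b : Fin 5) : Prop :=
  b ∈ (![{1, 3}, {2, 4}, {0, 4}, {1, 2, 4}, {0}] : Fin 5 → Finset (Fin 5)) a

instance : DecidableRel gamma22Model :=
  fun _ _ ↦ inferInstanceAs (Decidable (_ ∈ _))

theorem outDeg_gamma22Model (a : Fin 5) : outDeg gamma22Model a = ![2, 2, 2, 3, 1] a := by
  rw [outDeg, Nat.card_eq_fintype_card]
  revert a
  decide

theorem isTournament_gamma22Model : IsTournament gamma22Model :=
  ⟨by decide, fun a b hab ↦ xor_iff_iff_not.mpr (by revert a b; decide)⟩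

theorem isGamma22_gamma22Model : IsGamma22 gamma22Model := by
  refine ⟨isTournament_gamma22Model, ?_⟩
  simp only [outDeg_gamma22Model]
  refine ⟨by decide, by decide, 0, 1, 2, ?_⟩
  decide

instance subsingleton_aut_gamma22Model : Subsingleton (gamma22Model ≃r gamma22Model) := by
  refine subsingleton_of_forall_eq (RelIso.refl _) fun e ↦ ?_
  have hdeg (a : Fin 5) : (![2, 2, 2, 3, 1] : Fin 5 → ℕ) (e a) = ![2, 2, 2, 3, 1] a := by
    simpa only [outDeg_gamma22Model] using outDeg_relIso e a
  have hrel {a b : Fin 5} (hab : gamma22Model a b) : gamma22Model (e a) (e b) :=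
    e.map_rel_iff.mpr hab
  have h3 : e 3 = 3 :=
    (by decide : ∀ x : Fin 5, (![2, 2, 2, 3, 1] : Fin 5 → ℕ) x = 3 → x = 3) _ (hdeg 3)
  have h4 : e 4 = 4 :=
    (by decide : ∀ x : Fin 5, (![2, 2, 2, 3, 1] : Fin 5 → ℕ) x = 1 → x = 4) _ (hdeg 4)
  have h0 : e 0 = 0 :=
    (by decide : ∀ x, gamma22Model 4 x → x = 0) _ (h4 ▸ hrel (by decide : gamma22Model 4 0))
  have h1 : e 1 = 1 :=
    (by decide : ∀ x, gamma22Model 0 x → gamma22Model 3 x → x = 1) _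
      (h0 ▸ hrel (by decide : gamma22Model 0 1)) (h3 ▸ hrel (by decide : gamma22Model 3 1))
  have h2 : e 2 = 2 :=
    (by decide : ∀ x, gamma22Model 1 x → gamma22Model x 4 → x = 2) _
      (h1 ▸ hrel (by decide : gamma22Model 1 2)) (h4 ▸ hrel (by decide : gamma22Model 2 4))
  ext a
  fin_cases a <;> simp [*]

/-- A tournament consisting of a directed 3-cycle `u → v → t → u` of vertices of out-degree 2 and
an arc `p → q` between the two remaining vertices. -/
structure IsCycleWithArc (r : Fin 5 → Fin 5 → Prop) (u v t p q : Fin 5) : Prop where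
  isTournament : IsTournament r
  nodup : [u, v, t, p, q].Nodup
  rel_uv : r u v
  rel_vt : r v t
  rel_tu : r t u
  outDeg_u : outDeg r u = 2
  outDeg_v : outDeg r v = 2
  outDeg_t : outDeg r t = 2
  rel_pq : r p q

namespace IsCycleWithArc

variable {u v t p q : Fin 5}

theorem rotate (h : IsCycleWithArc r u v t p q) : IsCycleWithArc r v t u p q where
  isTournament := h.isTournament
  nodup := ((List.perm_append_comm (l₁ := [u]) (l₂ := [v, t])).append_right [p, q]).nodup h.nodup
  rel_uv := h.rel_vt
  rel_vt := h.rel_tu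
  rel_tu := h.rel_uv
  outDeg_u := h.outDeg_v
  outDeg_v := h.outDeg_t
  outDeg_t := h.outDeg_u
  rel_pq := h.rel_pq

theorem outDeg_eq [DecidableRel r] (h : IsCycleWithArc r u v t p q) (x : Fin 5) :
    outDeg r x = (if r x u then 1 else 0) + (if r x v then 1 else 0) + (if r x t then 1 else 0) +
      (if r x p then 1 else 0) + (if r x q then 1 else 0) := by
  rw [outDeg_eq_sum_map h.nodup rfl]
  simp only [List.map_cons, List.map_nil, List.sum_cons, List.sum_nil, add_zero, add_assoc]

theorem rel_up_iff_not_rel_pu (h : IsCycleWithArc r u v t p q) : r u p ↔ ¬ r p u :=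
  h.isTournament.rel_iff_not_rel (by have := h.nodup; grind)

theorem rel_pu_iff_rel_uq (h : IsCycleWithArc r u v t p q) : r p u ↔ r u q := by
  classical
  have hut : ¬ r u t := h.isTournament.asymm.asymm _ _ h.rel_tu
  have hexactly_one : r u p ↔ ¬ r u q := by
    have hdeg := h.outDeg_u
    rw [h.outDeg_eq, if_neg (h.isTournament.1 u), if_pos h.rel_uv, if_neg hut] at hdeg
    split_ifs at hdeg <;> simp_all
  rw [← not_iff_not, ← h.rel_up_iff_not_rel_pu, hexactly_one]

theorem rel_qu_iff_not_rel_pu (h : IsCycleWithArc r u v t p q) : r q u ↔ ¬ r p u := by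
  rw [h.rel_pu_iff_rel_uq]
  exact h.isTournament.rel_iff_not_rel (by have := h.nodup; grind)

theorem outDeg_p [DecidableRel r] (h : IsCycleWithArc r u v t p q) :
    outDeg r p =
      (if r p u then 1 else 0) + (if r p v then 1 else 0) + (if r p t then 1 else 0) + 1 := by
  rw [h.outDeg_eq, if_neg (h.isTournament.1 p), if_pos h.rel_pq, add_zero]

theorem outDeg_q_eq_three (h : IsCycleWithArc r u v t p q) (hu : r q u) (hv : r q v)
    (ht : r q t) : outDeg r q = 3 := by
  classical
  have hqp : ¬ r q p := h.isTournament.asymm.asymm _ _ h.rel_pq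
  rw [h.outDeg_eq, if_pos hu, if_pos hv, if_pos ht, if_neg hqp, if_neg (h.isTournament.1 q)]

theorem rel_p_two_of_three (h : IsCycleWithArc r u v t p q) (htwo : outDeg r p ≠ 2)
    (hfour : outDeg r p ≠ 4) (hthree : outDeg r q = 3 → ¬ (r q u ∧ r q v ∧ r q t)) :
    (¬ r p u ∧ r p v ∧ r p t) ∨ (¬ r p v ∧ r p t ∧ r p u) ∨ (¬ r p t ∧ r p u ∧ r p v) := by
  classical
  have hsome : r p u ∨ r p v ∨ r p t := by
    by_contra! hnone
    have hu := h.rel_qu_iff_not_rel_pu.mpr hnone.1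
    have hv := h.rotate.rel_qu_iff_not_rel_pu.mpr hnone.2.1
    have ht := h.rotate.rotate.rel_qu_iff_not_rel_pu.mpr hnone.2.2
    exact hthree (h.outDeg_q_eq_three hu hv ht) ⟨hu, hv, ht⟩
  rw [h.outDeg_p] at htwo hfour
  split_ifs at htwo hfour <;> tauto

theorem nonempty_relIso (h : IsCycleWithArc r u v t p q) (hpu : ¬ r p u) (hpv : r p v)
    (hpt : r p t) : Nonempty (gamma22Model ≃r r) := by
  have hup : r u p := h.rel_up_iff_not_rel_pu.mpr hpu
  have hqu : r q u := h.rel_qu_iff_not_rel_pu.mpr hpu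
  have hvq : r v q := h.rotate.rel_pu_iff_rel_uq.mp hpv
  have htq : r t q := h.rotate.rotate.rel_pu_iff_rel_uq.mp hpt
  have := isTournament_gamma22Model.trichotomous
  have := h.isTournament.asymm
  refine nonempty_relIso_of_map_rel ![u, v, t, p, q] ?_
  simp [Fin.forall_fin_succ, gamma22Model, h.rel_uv, h.rel_vt, h.rel_tu, h.rel_pq, *]

end IsCycleWithArc

theorem IsTournament.exists_isCycleWithArc (hr : IsTournament r) {u v t : Fin 5} (huv : r u v)
    (hvt : r v t) (htu : r t u) (hu : outDeg r u = 2) (hv : outDeg r v = 2)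
    (ht : outDeg r t = 2) : ∃ p q, IsCycleWithArc r u v t p q := by
  have huv_ne : u ≠ v := by rintro rfl; exact hr.1 u huv
  have hvt_ne : v ≠ t := by rintro rfl; exact hr.1 v hvt
  have htu_ne : t ≠ u := by rintro rfl; exact hr.1 t htu
  have hcard : ({u, v, t}ᶜ : Finset (Fin 5)).card = 2 := by
    rw [Finset.card_compl, Finset.card_eq_three.mpr ⟨u, v, t, huv_ne, htu_ne.symm, hvt_ne, rfl⟩,
      Fintype.card_fin]
  obtain ⟨p, q, hpq_ne, hcompl⟩ := Finset.card_eq_two.mp hcard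
  have hp : p ∈ ({u, v, t}ᶜ : Finset (Fin 5)) := by simp [hcompl]
  have hq : q ∈ ({u, v, t}ᶜ : Finset (Fin 5)) := by simp [hcompl]
  simp only [Finset.mem_compl, Finset.mem_insert, Finset.mem_singleton, not_or] at hp hq
  by_cases hpq : r p q
  · exact ⟨p, q, hr, by grind, huv, hvt, htu, hu, hv, ht, hpq⟩
  · exact ⟨q, p, hr, by grind, huv, hvt, htu, hu, hv, ht,
      (hr.rel_iff_not_rel hpq_ne.symm).mpr hpq⟩

theorem IsGamma22.nonempty_relIso (hr : IsGamma22 r) : Nonempty (gamma22Model ≃r r) := by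
  obtain ⟨htour, hfour, -, u, v, t, -, -, -, hu, hv, ht, htwo, huv, hvt, htu, hthree⟩ := hr
  obtain ⟨p, q, h⟩ := htour.exists_isCycleWithArc huv hvt htu hu hv ht
  have hp_two : outDeg r p ≠ 2 := fun hp ↦ by
    have := htwo p hp
    have := h.nodup
    grind
  have hp_four : outDeg r p ≠ 4 := fun hp ↦ hfour ⟨p, hp⟩
  rcases h.rel_p_two_of_three hp_two hp_four (hthree q) with
    ⟨hpu, hpv, hpt⟩ | ⟨hpv, hpt, hpu⟩ | ⟨hpt, hpu, hpv⟩
  · exact h.nonempty_relIso hpu hpv hpt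
  · exact h.rotate.nonempty_relIso hpv hpt hpu
  · exact h.rotate.rotate.nonempty_relIso hpt hpu hpv

theorem isGamma22_iff_nonempty_relIso : IsGamma22 r ↔ Nonempty (gamma22Model ≃r r) :=
  ⟨IsGamma22.nonempty_relIso, fun ⟨e⟩ ↦ isGamma22_gamma22Model.map e⟩

end

/-- exactly 120 tournaments on Fin 5 have no vertex of out-degree 4,
no vertex of out-degree 0, exactly three vertices of out-degree 2 forming a directed
3-cycle, and the (unique) vertex of out-degree 3 does not defeat all three of them
(the class Γ₂,₂). -/
theorem count_Gamma22 :
    Nat.card {r : Fin 5 → Fin 5 → Prop //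
      IsTournament r ∧ (¬ ∃ w, outDeg r w = 4) ∧ (¬ ∃ l, outDeg r l = 0) ∧
      (∃ u v t : Fin 5, u ≠ v ∧ v ≠ t ∧ u ≠ t ∧
        outDeg r u = 2 ∧ outDeg r v = 2 ∧ outDeg r t = 2 ∧
        (∀ x, outDeg r x = 2 → x = u ∨ x = v ∨ x = t) ∧
        r u v ∧ r v t ∧ r t u ∧
        (∀ x, outDeg r x = 3 → ¬ (r x u ∧ r x v ∧ r x t)))} = 120 := by
  change Nat.card {r // IsGamma22 r} = 120
  simp only [isGamma22_iff_nonempty_relIso]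
  calc Nat.card {r // Nonempty (gamma22Model ≃r r)}
    _ = Nat.card {r // Nonempty (gamma22Model ≃r r)} * Nat.card (gamma22Model ≃r gamma22Model) := by
      rw [Nat.card_unique (α := gamma22Model ≃r gamma22Model), mul_one]
    _ = Nat.card (Equiv.Perm (Fin 5)) := card_relIso_class_mul_card_aut gamma22Model
    _ = Nat.factorial 5 := by rw [Nat.card_perm, Nat.card_fin]
    _ = 120 := rfl
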